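/- arXiv:2202.11583 — 2 statements merged into one kernel-verified Lean document; each statement's English description precedes it below -/
import Mathlib

section
/- Let n ≥ 2, let W be a normalized double-well potential, and let η be the optimal transition profile. Define the quadratic form Q(u) = ∫_ℝ ( 2 u'(s)² + W''(η(s)) u(s)² ) ds for u ∈ H¹(ℝ). Then Q(u) ≥ 0 for every u ∈ H¹(ℝ), and Q(u) = 0 if and only if u = t η' for some t ∈ ℝ. -/
noncomputable section

open MeasureTheory Real Set Filter

abbrev En (n : ℕ) : Type := EuclideanSpace ℝ (Fin n)

/-- Volume of the unit ball of `ℝⁿ`. -/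
def ballVol (n : ℕ) : ℝ := (volume (Metric.ball (0 : En n) 1)).toReal

/-- A normalized double-well potential. -/
structure DoubleWell (W : ℝ → ℝ) : Prop where
  contDiffOn : ContDiffOn ℝ 2 W (Icc 0 1)
  lipschitzSecond : ∃ L : NNReal, LipschitzOnWith L (iteratedDerivWithin 2 W (Icc 0 1)) (Icc 0 1)
  zero_at_zero : W 0 = 0
  zero_at_one : W 1 = 0
  pos_on : ∀ t ∈ Ioo (0:ℝ) 1, 0 < W t
  second_pos_zero : 0 < iteratedDerivWithin 2 W (Icc 0 1) 0
  second_pos_one : 0 < iteratedDerivWithin 2 W (Icc 0 1) 1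
  normalized : ∫ t in (0:ℝ)..1, Real.sqrt (W t) = 1

/-- `Φ(t) = ∫₀ᵗ √W`. -/
def Phi (W : ℝ → ℝ) (t : ℝ) : ℝ := ∫ s in (0:ℝ)..t, Real.sqrt (W s)

/-- `V(t) = Φ(t)^{n/(n-1)}`. -/
def Vpot (n : ℕ) (W : ℝ → ℝ) (t : ℝ) : ℝ := Phi W t ^ ((n : ℝ) / ((n : ℝ) - 1))

/-- Membership in `H¹(ℝⁿ;[0,1])`. -/
structure H1Box (n : ℕ) (u : En n → ℝ) : Prop where
  mem_Icc : ∀ x, u x ∈ Icc (0:ℝ) 1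
  diff : Differentiable ℝ u
  memL2 : MemLp u 2 (volume : Measure (En n))
  grad_memL2 : MemLp (fun x => fderiv ℝ u x) 2 (volume : Measure (En n))

/-- The Allen–Cahn energy. -/
def AC (n : ℕ) (W : ℝ → ℝ) (σ : ℝ) (u : En n → ℝ) : ℝ :=
  σ * (∫ x : En n, ‖fderiv ℝ u x‖ ^ 2) + σ⁻¹ * (∫ x : En n, W (u x))

/-- The isoperimetric-type infimum `Ψ(σ,m)`. -/
def Psi (n : ℕ) (W : ℝ → ℝ) (σ m : ℝ) : ℝ :=
  sInf ((fun u => AC n W σ u) ''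
    {u : En n → ℝ | H1Box n u ∧ (∫ x : En n, Vpot n W (u x)) = m})

/-- `u` is a minimizer of `ψ(ε) = Ψ(ε,1)`. -/
def Minimizes (n : ℕ) (W : ℝ → ℝ) (ε : ℝ) (u : En n → ℝ) : Prop :=
  H1Box n u ∧ (∫ x : En n, Vpot n W (u x)) = 1 ∧ AC n W ε u = Psi n W ε 1

/-- Radial function. -/
def Radial (n : ℕ) (u : En n → ℝ) : Prop :=
  ∃ ζ : ℝ → ℝ, ∀ x : En n, u x = ζ ‖x‖

/-- Radial decreasing function. -/
def RadialDecreasing (n : ℕ) (u : En n → ℝ) : Prop :=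
  ∃ ζ : ℝ → ℝ, AntitoneOn ζ (Ici 0) ∧ ∀ x : En n, u x = ζ ‖x‖

/-- The Laplacian as the trace of the second derivative. -/
def lap (n : ℕ) (u : En n → ℝ) (x : En n) : ℝ :=
  ∑ i : Fin n,
    fderiv ℝ (fun y => fderiv ℝ u y (EuclideanSpace.single i 1)) x (EuclideanSpace.single i 1)

/-- The optimal transition profile `η`. -/
structure TransitionProfile (W : ℝ → ℝ) (η : ℝ → ℝ) : Prop where
  mem : ∀ s, η s ∈ Ioo (0:ℝ) 1
  init : η 0 = 1/2
  ode : ∀ s, HasDerivAt η (-(Real.sqrt (W (η s)))) s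
  anti : StrictAnti η
  tendsto_bot : Tendsto η atBot (nhds 1)
  tendsto_top : Tendsto η atTop (nhds 0)

/-- `d_Φ(u,v)`. -/
def dPhi (n : ℕ) (W : ℝ → ℝ) (u v : En n → ℝ) : ℝ :=
  ∫ x : En n, |Phi W (u x) - Phi W (v x)| ^ ((n : ℝ) / ((n : ℝ) - 1))

/-- `R₀ = ω_n^{-1/n}`. -/
def R0 (n : ℕ) : ℝ := ballVol n ^ (-(1:ℝ) / (n : ℝ))

/-- Membership in `H¹(ℝ)`. -/
def H1R (u : ℝ → ℝ) : Prop :=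
  Differentiable ℝ u ∧ MemLp u 2 (volume : Measure ℝ) ∧
    MemLp (deriv u) 2 (volume : Measure ℝ)

/-- A positive function on the line with `f'' ≤ K² f` satisfies `f' ≥ -K f`. -/
lemma riccati_lower (f f1 f2 : ℝ → ℝ) (K : ℝ) (hK : 0 ≤ K) (hpos : ∀ s, 0 < f s)
    (h1 : ∀ s, HasDerivAt f (f1 s) s) (h2 : ∀ s, HasDerivAt f1 (f2 s) s)
    (hle : ∀ s, f2 s ≤ K ^ 2 * f s) (s : ℝ) : -(K * f s) ≤ f1 s := by
  by_contra hcon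
  push Not at hcon
  have he : ∀ c x : ℝ, HasDerivAt (fun y => Real.exp (c * y)) (Real.exp (c * x) * c) x := by
    intro c x
    simpa using ((hasDerivAt_id x).const_mul c).exp
  have hh : ∀ x, HasDerivAt (fun y => (f1 y + K * f y) * Real.exp (-K * y))
      ((f2 x - K ^ 2 * f x) * Real.exp (-K * x)) x := by
    intro x
    have := ((h2 x).fun_add ((h1 x).const_mul K)).fun_mul (he (-K) x)
    refine this.congr_deriv ?_
    ring
  have hanti : Antitone (fun y => (f1 y + K * f y) * Real.exp (-K * y)) := by
    apply antitone_of_deriv_nonpos (fun x => (hh x).differentiableAt)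
    intro x
    rw [(hh x).deriv]
    exact mul_nonpos_of_nonpos_of_nonneg (by linarith [hle x]) (Real.exp_pos _).le
  set c : ℝ := -((f1 s + K * f s) * Real.exp (-K * s)) with hc
  have hcpos : 0 < c := by
    rw [hc]
    have := mul_neg_of_neg_of_pos (show f1 s + K * f s < 0 by linarith) (Real.exp_pos (-K * s))
    linarith
  set d : ℝ := c * Real.exp (2 * K * s) with hd
  have hdpos : 0 < d := mul_pos hcpos (Real.exp_pos _)
  have hm : ∀ x, HasDerivAt (fun y => f y * Real.exp (K * y) + d * y)
      ((f1 x + K * f x) * Real.exp (K * x) + d) x := by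
    intro x
    have := ((h1 x).fun_mul (he K x)).fun_add ((hasDerivAt_id' x).const_mul d)
    refine this.congr_deriv ?_
    ring
  have hanti2 : AntitoneOn (fun y => f y * Real.exp (K * y) + d * y) (Ici s) := by
    apply antitoneOn_of_deriv_nonpos (convex_Ici s)
    · exact fun x _ => (hm x).continuousAt.continuousWithinAt
    · exact fun x _ => (hm x).differentiableAt.differentiableWithinAt
    · intro x hx
      rw [interior_Ici] at hx
      rw [(hm x).deriv]
      have hx' : s ≤ x := le_of_lt hx
      have h3 : (f1 x + K * f x) * Real.exp (-K * x) ≤ -c := by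
        have := hanti hx'
        simp only at this
        linarith
      have h4 : Real.exp (K * x) = Real.exp (-K * x) * Real.exp (2 * K * x) := by
        rw [← Real.exp_add]; ring_nf
      have h5 : Real.exp (2 * K * s) ≤ Real.exp (2 * K * x) := by
        apply Real.exp_le_exp.2
        nlinarith
      rw [h4, ← mul_assoc]
      have h6 := mul_le_mul_of_nonneg_right h3 (Real.exp_pos (2 * K * x)).le
      have h7 := mul_le_mul_of_nonneg_left h5 hcpos.le
      linarith
  set A := f s * Real.exp (K * s) with hA
  have hApos : 0 < A := mul_pos (hpos s) (Real.exp_pos _)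
  have hx : s ≤ s + A / d := by
    have := div_pos hApos hdpos
    linarith
  have h8 := hanti2 (mem_Ici.2 le_rfl) (mem_Ici.2 hx) hx
  simp only at h8
  have h9 : 0 < f (s + A / d) * Real.exp (K * (s + A / d)) := mul_pos (hpos _) (Real.exp_pos _)
  have h10 : d * (s + A / d) = d * s + A := by field_simp
  linarith

/-- Two-sided version. -/
lemma riccati_abs (f f1 f2 : ℝ → ℝ) (K : ℝ) (hK : 0 ≤ K) (hpos : ∀ s, 0 < f s)
    (h1 : ∀ s, HasDerivAt f (f1 s) s) (h2 : ∀ s, HasDerivAt f1 (f2 s) s)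
    (hle : ∀ s, f2 s ≤ K ^ 2 * f s) (s : ℝ) : |f1 s| ≤ K * f s := by
  rw [abs_le]
  refine ⟨riccati_lower f f1 f2 K hK hpos h1 h2 hle s, ?_⟩
  have := riccati_lower (fun x => f (-x)) (fun x => -f1 (-x)) (fun x => f2 (-x)) K hK
    (fun x => hpos _) (fun x => ?_) (fun x => ?_) (fun x => hle _) (-s)
  · simp only [neg_neg] at this
    linarith
  · exact ((h1 (-x)).comp x (hasDerivAt_neg x)).congr_deriv (by ring)
  · exact ((h2 (-x)).comp x (hasDerivAt_neg x)).neg.congr_deriv (by ring)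

/-- The key identity `Q(u) = 2 ∫ (u' - g u)²`. -/
lemma key_identity (q g u : ℝ → ℝ) (K C : ℝ) (hq : Continuous q) (hqb : ∀ s, |q s| ≤ C)
    (hg : ∀ s, HasDerivAt g (q s / 2 - g s ^ 2) s) (hgb : ∀ s, |g s| ≤ K) (hu : H1R u) :
    Integrable (fun s => (deriv u s - g s * u s) ^ 2) ∧
    ∫ s : ℝ, (2 * deriv u s ^ 2 + q s * u s ^ 2) = 2 * ∫ s, (deriv u s - g s * u s) ^ 2 := by
  obtain ⟨hud, hu2, hu'2⟩ := hu
  have hgc : Continuous g := continuous_iff_continuousAt.2 fun s => (hg s).continuousAt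
  have hgu : MemLp (fun s => g s * u s) 2 volume := by
    refine MemLp.of_le_mul (c := K) hu2
      (hgc.aestronglyMeasurable.mul hu2.aestronglyMeasurable) (ae_of_all _ fun s => ?_)
    rw [norm_mul]
    exact mul_le_mul_of_nonneg_right (hgb s) (norm_nonneg _)
  have hqu : MemLp (fun s => q s * u s) 2 volume := by
    refine MemLp.of_le_mul (c := C) hu2
      (hq.aestronglyMeasurable.mul hu2.aestronglyMeasurable) (ae_of_all _ fun s => ?_)
    rw [norm_mul]
    exact mul_le_mul_of_nonneg_right (hqb s) (norm_nonneg _)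
  have hI : Integrable (fun s => (deriv u s - g s * u s) ^ 2) := (hu'2.sub hgu).integrable_sq
  have hF : Integrable (fun s => 2 * deriv u s ^ 2 + q s * u s ^ 2) := by
    refine (hu'2.integrable_sq.const_mul 2).add ?_
    refine (hqu.integrable_mul hu2).congr (ae_of_all _ fun s => ?_)
    simp only [Pi.mul_apply]
    ring
  refine ⟨hI, ?_⟩
  have hG : Integrable (fun s => g s * u s ^ 2) := by
    refine (hgu.integrable_mul hu2).congr (ae_of_all _ fun s => ?_)
    simp only [Pi.mul_apply]
    ring
  have hG' : ∀ s, HasDerivAt (fun s => g s * u s ^ 2)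
      ((2 * deriv u s ^ 2 + q s * u s ^ 2) / 2 - (deriv u s - g s * u s) ^ 2) s := by
    intro s
    refine ((hg s).fun_mul ((hud s).hasDerivAt.fun_pow 2)).congr_deriv ?_
    simp
    ring
  have h0 := integral_eq_zero_of_hasDerivAt_of_integrable hG'
    ((hF.div_const 2).sub hI) hG
  rw [integral_sub (hF.div_const 2) hI, integral_div] at h0
  linarith

/-- Profile facts: first and second derivatives of `η'`. -/
lemma profile_facts (W : ℝ → ℝ) (hW : DoubleWell W) (η : ℝ → ℝ) (hη : TransitionProfile W η) :
    (∀ s, deriv η s < 0) ∧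
    (∀ s, HasDerivAt (deriv η) (iteratedDerivWithin 1 W (Icc 0 1) (η s) / 2) s) ∧
    (∀ s, HasDerivAt (fun x => iteratedDerivWithin 1 W (Icc 0 1) (η x) / 2)
      (iteratedDerivWithin 2 W (Icc 0 1) (η s) / 2 * deriv η s) s) := by
  have hd : deriv η = fun s => -(Real.sqrt (W (η s))) := funext fun s => (hη.ode s).deriv
  have hWp : ∀ s, 0 < W (η s) := fun s => hW.pos_on _ (hη.mem s)
  have hnhds : ∀ s, Icc (0:ℝ) 1 ∈ nhds (η s) := fun s => Icc_mem_nhds (hη.mem s).1 (hη.mem s).2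
  have hmem : ∀ s, η s ∈ Icc (0:ℝ) 1 := fun s => Ioo_subset_Icc_self (hη.mem s)
  have hW1 : ∀ s, HasDerivAt W (iteratedDerivWithin 1 W (Icc 0 1) (η s)) (η s) := by
    intro s
    rw [iteratedDerivWithin_one]
    exact ((hW.contDiffOn.differentiableOn (by norm_num)) _ (hmem s)).hasDerivWithinAt.hasDerivAt
      (hnhds s)
  have hW2 : ∀ s, HasDerivAt (iteratedDerivWithin 1 W (Icc 0 1))
      (iteratedDerivWithin 2 W (Icc 0 1) (η s)) (η s) := by
    intro s
    rw [show iteratedDerivWithin 2 W (Icc 0 1) = derivWithin (iteratedDerivWithin 1 W (Icc 0 1))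
      (Icc 0 1) from iteratedDerivWithin_succ]
    exact ((hW.contDiffOn.differentiableOn_iteratedDerivWithin (m := 1) (by norm_num)
      (uniqueDiffOn_Icc one_pos)) _ (hmem s)).hasDerivWithinAt.hasDerivAt (hnhds s)
  refine ⟨fun s => ?_, fun s => ?_, fun s => ?_⟩
  · rw [hd]
    simpa using hWp s
  · rw [hd]
    have hsq : Real.sqrt (W (η s)) ≠ 0 := (Real.sqrt_pos.2 (hWp s)).ne'
    refine (((hW1 s).comp s (hη.ode s)).sqrt (hWp s).ne').fun_neg.congr_deriv ?_
    simp only [Function.comp]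
    field_simp
  · refine (((hW2 s).comp s (hη.ode s)).div_const 2).congr_deriv ?_
    rw [hd]
    ring

theorem statement5 (n : ℕ) (hn : 2 ≤ n) (W : ℝ → ℝ) (hW : DoubleWell W)
    (η : ℝ → ℝ) (hη : TransitionProfile W η) (hη' : H1R (deriv η)) :
    (∀ u : ℝ → ℝ, H1R u →
      0 ≤ ∫ s : ℝ, (2 * deriv u s ^ 2 + iteratedDerivWithin 2 W (Icc 0 1) (η s) * u s ^ 2)) ∧
    (∀ u : ℝ → ℝ, H1R u →
      ((∫ s : ℝ, (2 * deriv u s ^ 2 + iteratedDerivWithin 2 W (Icc 0 1) (η s) * u s ^ 2)) = 0 ↔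
        ∃ t : ℝ, u = fun s => t * deriv η s)) := by
  obtain ⟨hneg, h1, h2⟩ := profile_facts W hW η hη
  have hmem : ∀ s, η s ∈ Icc (0:ℝ) 1 := fun s => Ioo_subset_Icc_self (hη.mem s)
  have hηc : Continuous η := continuous_iff_continuousAt.2 fun s => (hη.ode s).continuousAt
  have hcon : ContinuousOn (iteratedDerivWithin 2 W (Icc 0 1)) (Icc 0 1) :=
    hW.contDiffOn.continuousOn_iteratedDerivWithin (by norm_num) (uniqueDiffOn_Icc one_pos)
  obtain ⟨C, hC⟩ := isCompact_Icc.exists_bound_of_continuousOn hcon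
  set q : ℝ → ℝ := fun s => iteratedDerivWithin 2 W (Icc 0 1) (η s) with hq
  set p : ℝ → ℝ := fun s => iteratedDerivWithin 1 W (Icc 0 1) (η s) / 2 with hp
  replace h1 : ∀ s, HasDerivAt (deriv η) (p s) s := h1
  replace h2 : ∀ s, HasDerivAt p (q s / 2 * deriv η s) s := h2
  have hqc : Continuous q := hcon.comp_continuous hηc hmem
  have hqb : ∀ s, |q s| ≤ C := fun s => hC _ (hmem s)
  have hC0 : 0 ≤ C := (abs_nonneg _).trans (hqb 0)
  have hne : ∀ s, deriv η s ≠ 0 := fun s => (hneg s).ne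
  have hbd := riccati_abs (fun s => -deriv η s) (fun s => -p s) (fun s => -(q s / 2 * deriv η s))
    (Real.sqrt C) (Real.sqrt_nonneg _) (fun s => by have := hneg s; linarith)
    (fun s => (h1 s).neg) (fun s => (h2 s).neg) (fun s => by
      rw [Real.sq_sqrt hC0]
      have := (abs_le.1 (hqb s)).2
      nlinarith [hneg s])
  set g : ℝ → ℝ := fun s => p s / deriv η s with hg
  have hgb : ∀ s, |g s| ≤ Real.sqrt C := by
    intro s
    have := hbd s
    rw [abs_neg] at this
    rw [hg, abs_div, abs_of_neg (hneg s), div_le_iff₀ (by have := hneg s; linarith)]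
    exact this
  have hgd : ∀ s, HasDerivAt g (q s / 2 - g s ^ 2) s := by
    intro s
    refine ((h2 s).fun_div (h1 s) (hne s)).congr_deriv ?_
    have := hne s
    simp only [hg]
    field_simp
  have key := fun u hu => key_identity q g u (Real.sqrt C) C hqc hqb hgd hgb hu
  refine ⟨fun u hu => ?_, fun u hu => ?_⟩
  · rw [(key u hu).2]
    exact mul_nonneg zero_le_two (integral_nonneg fun s => sq_nonneg _)
  · rw [(key u hu).2]
    constructor
    · intro h
      have h0 : ∫ s, (deriv u s - g s * u s) ^ 2 = 0 := by linarith
      rw [integral_eq_zero_iff_of_nonneg (fun s => sq_nonneg _) (key u hu).1] at h0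
      have hder : ∀ s, HasDerivAt (fun s => u s / deriv η s)
          ((deriv u s - g s * u s) / deriv η s) s := by
        intro s
        refine ((hu.1 s).hasDerivAt.fun_div (h1 s) (hne s)).congr_deriv ?_
        have := hne s
        simp only [hg]
        field_simp
      have hae : (fun s => (deriv u s - g s * u s) / deriv η s) =ᵐ[volume] fun _ => (0:ℝ) := by
        filter_upwards [h0] with s hs
        have : deriv u s - g s * u s = 0 := by simpa using hs
        rw [this, zero_div]
      have hint : Integrable (fun s => (deriv u s - g s * u s) / deriv η s) :=
        (integrable_zero ℝ ℝ volume).congr hae.symm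
      refine ⟨u 0 / deriv η 0, funext fun s => ?_⟩
      have hftc := intervalIntegral.integral_eq_sub_of_hasDerivAt (a := 0) (b := s)
        (fun x _ => hder x) hint.intervalIntegrable
      rw [intervalIntegral.integral_congr_ae (g := fun _ => (0:ℝ))
        (hae.mono fun x hx _ => hx), intervalIntegral.integral_zero] at hftc
      rw [← sub_eq_zero.1 hftc.symm, div_mul_cancel₀ _ (hne s)]
    · rintro ⟨t, rfl⟩
      have : ∀ s, (deriv (fun s => t * deriv η s) s - g s * (t * deriv η s)) ^ 2 = 0 := by
        intro s
        rw [((h1 s).const_mul t).deriv]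
        have := hne s
        simp only [hg]
        field_simp
        ring
      simp only [this, integral_zero, mul_zero]
end
end

section
/- Let n ≥ 2, let W be a normalized double-well potential with associated V, let η be the optimal transition profile, and set R₀ = ω_n^{-1/n}, τ₀ = ∫_ℝ η'(s) V'(η(s)) s ds and τ₁ = ∫_ℝ W(η(s)) s ds. There exist universal constants ε₀ > 0 and C such that: for every ε ∈ (0,ε₀) there exists a unique τ_ε ∈ ℝ such that the function z_ε(x) = η((|x|−R₀)/ε − τ_ε) satisfies ∫_{ℝⁿ} V(z_ε) dx = 1; moreover |τ_ε − τ₀| ≤ C ε and | AC_ε(z_ε) − 2 n ω_n^{1/n} − 2 n (n−1) ω_n^{2/n} (τ₀+τ₁) ε | ≤ C ε². -/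
noncomputable section

open MeasureTheory Real Set Filter

lemma W_nonneg {W : ℝ → ℝ} (hW : DoubleWell W) {t : ℝ} (ht : t ∈ Icc (0:ℝ) 1) : 0 ≤ W t := by
  rcases eq_or_lt_of_le ht.1 with h | h
  · rw [← h, hW.zero_at_zero]
  rcases eq_or_lt_of_le ht.2 with h' | h'
  · rw [h', hW.zero_at_one]
  · exact (hW.pos_on t ⟨h, h'⟩).le

lemma W_upper {W : ℝ → ℝ} (hW : DoubleWell W) :
    ∃ K > (0:ℝ), ∀ t ∈ Icc (0:ℝ) 1, W t ≤ K * t ∧ W t ≤ K * (1 - t) := by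
  obtain ⟨K, hK⟩ := (hW.contDiffOn.of_le (by norm_num : (1 : WithTop ℕ∞) ≤ 2)).exists_lipschitzOnWith
    (by norm_num) (convex_Icc 0 1) isCompact_Icc
  refine ⟨K + 1, by positivity, fun t ht => ⟨?_, ?_⟩⟩
  · have := hK.dist_le_mul t ht 0 (by simp)
    rw [hW.zero_at_zero, Real.dist_eq, Real.dist_eq, sub_zero, sub_zero, abs_of_nonneg ht.1] at this
    nlinarith [le_abs_self (W t), ht.1]
  · have := hK.dist_le_mul t ht 1 (by simp)
    rw [hW.zero_at_one, Real.dist_eq, Real.dist_eq, sub_zero, abs_sub_comm t 1,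
      abs_of_nonneg (sub_nonneg.2 ht.2)] at this
    nlinarith [le_abs_self (W t), ht.2]

lemma quad_lower {W : ℝ → ℝ} (hW : DoubleWell W) {x₀ : ℝ} (hx : x₀ ∈ Icc (0:ℝ) 1)
    (h0 : W x₀ = 0) (hp : 0 < iteratedDerivWithin 2 W (Icc 0 1) x₀) :
    ∃ a > (0:ℝ), ∀ᶠ t in nhdsWithin x₀ (Icc 0 1), a * (t - x₀) ^ 2 ≤ W t := by
  set A := iteratedDerivWithin 2 W (Icc 0 1) x₀
  have hT := taylor_isLittleO (convex_Icc (0:ℝ) 1) hx hW.contDiffOn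
  have hderiv : ∀ t ∈ Icc (0:ℝ) 1, 0 ≤ derivWithin W (Icc 0 1) x₀ * (t - x₀) := by
    intro t ht
    have hd : HasFDerivWithinAt W (fderivWithin ℝ W (Icc 0 1) x₀) (Icc 0 1) x₀ :=
      (hW.contDiffOn.differentiableOn (by norm_num) x₀ hx).hasFDerivWithinAt
    have hm : IsLocalMinOn W (Icc 0 1) x₀ := by
      filter_upwards [self_mem_nhdsWithin] with y hy
      rw [h0]; exact W_nonneg hW hy
    have := hm.hasFDerivWithinAt_nonneg hd
      (y := t - x₀) (sub_mem_posTangentConeAt_of_segment_subset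
        ((convex_Icc (0:ℝ) 1).segment_subset hx ht))
    rw [← fderivWithin_derivWithin]
    have h2 : (fderivWithin ℝ W (Icc 0 1) x₀) (t - x₀) = (t - x₀) * (fderivWithin ℝ W (Icc 0 1) x₀) 1 := by
      conv_lhs => rw [show t - x₀ = (t - x₀) • (1:ℝ) by simp, map_smul]
      simp
    linarith
  refine ⟨A / 4, by positivity, ?_⟩
  filter_upwards [hT.def (show 0 < A / 4 by positivity), self_mem_nhdsWithin] with t ht ht'
  rw [taylorWithinEval_succ, taylorWithinEval_succ, taylor_within_zero_eval] at ht
  simp only [h0] at ht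
  rw [Real.norm_eq_abs, Real.norm_eq_abs, abs_of_nonneg (sq_nonneg (t - x₀))] at ht
  have h1 := (abs_le.1 ht).1
  have h2 := hderiv t ht'
  norm_num at h1
  have hA : iteratedDerivWithin 2 W (Icc 0 1) x₀ = A := rfl
  rw [hA] at h1
  nlinarith

lemma sqrtW_lower {W : ℝ → ℝ} (hW : DoubleWell W) :
    ∃ c > (0:ℝ), ∀ t ∈ Icc (0:ℝ) 1, c * (t * (1 - t)) ≤ Real.sqrt (W t) := by
  have hloc : ∀ x ∈ Icc (0:ℝ) 1, ∃ a > (0:ℝ), ∀ᶠ t in nhdsWithin x (Icc 0 1),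
      a * (t * (1 - t)) ^ 2 ≤ W t := by
    intro x hx
    rcases eq_or_lt_of_le hx.1 with h | h
    · subst h
      obtain ⟨a, ha, h⟩ := quad_lower hW hx hW.zero_at_zero hW.second_pos_zero
      refine ⟨a, ha, ?_⟩
      filter_upwards [h, self_mem_nhdsWithin] with t ht ht'
      refine le_trans ?_ ht
      gcongr
      · exact mul_nonneg ht'.1 (sub_nonneg.2 ht'.2)
      · nlinarith [ht'.1, ht'.2]
    rcases eq_or_lt_of_le hx.2 with h' | h'
    · subst h'
      obtain ⟨a, ha, h⟩ := quad_lower hW hx hW.zero_at_one hW.second_pos_one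
      refine ⟨a, ha, ?_⟩
      filter_upwards [h, self_mem_nhdsWithin] with t ht ht'
      refine le_trans ?_ ht
      rw [show (t - 1) ^ 2 = (1 - t) ^ 2 by ring]
      gcongr
      · exact mul_nonneg ht'.1 (sub_nonneg.2 ht'.2)
      · nlinarith [ht'.1, ht'.2]
    · have hp := hW.pos_on x ⟨h, h'⟩
      refine ⟨W x / 2, by positivity, ?_⟩
      have hc := (hW.contDiffOn.continuousOn x hx).eventually (lt_mem_nhds (half_lt_self hp))
      filter_upwards [hc, self_mem_nhdsWithin] with t ht ht'
      have : (t * (1 - t)) ^ 2 ≤ 1 := by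
        apply pow_le_one₀ (mul_nonneg ht'.1 (sub_nonneg.2 ht'.2))
        nlinarith [ht'.1, ht'.2]
      nlinarith
  have : ∃ a > (0:ℝ), ∀ t ∈ Icc (0:ℝ) 1, a * (t * (1 - t)) ^ 2 ≤ W t := by
    refine isCompact_Icc.induction_on (p := fun s => ∃ a > (0:ℝ), ∀ t ∈ s, a * (t * (1 - t)) ^ 2 ≤ W t)
      ⟨1, one_pos, by simp⟩ ?_ ?_ ?_
    · rintro s t hst ⟨a, ha, h⟩
      exact ⟨a, ha, fun x hx => h x (hst hx)⟩
    · rintro s t ⟨a, ha, h⟩ ⟨b, hb, h'⟩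
      refine ⟨min a b, lt_min ha hb, ?_⟩
      rintro x (hx | hx)
      · exact le_trans (by gcongr; exact min_le_left _ _) (h x hx)
      · exact le_trans (by gcongr; exact min_le_right _ _) (h' x hx)
    · intro x hx
      obtain ⟨a, ha, h⟩ := hloc x hx
      exact ⟨_, h, a, ha, fun t ht => ht⟩
  obtain ⟨a, ha, h⟩ := this
  refine ⟨Real.sqrt a, Real.sqrt_pos.2 ha, fun t ht => ?_⟩
  apply Real.le_sqrt_of_sq_le
  rw [mul_pow, Real.sq_sqrt ha.le]
  exact h t ht

lemma g_decay {W : ℝ → ℝ} (hW : DoubleWell W) {η : ℝ → ℝ} (hη : TransitionProfile W η) :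
    ∃ c > (0:ℝ), ∃ K > (0:ℝ), ∀ s, W (η s) ≤ K * Real.exp (-(c * |s|)) := by
  obtain ⟨c, hc, hlow⟩ := sqrtW_lower hW
  obtain ⟨K, hK, hup⟩ := W_upper hW
  have hmem : ∀ s, η s ∈ Icc (0:ℝ) 1 := fun s => Ioo_subset_Icc_self (hη.mem s)
  let q : ℝ → ℝ := fun s => Real.log (η s) - Real.log (1 - η s) + c * s
  have hq : Antitone q := by
    have hd : ∀ s, HasDerivAt q (-(Real.sqrt (W (η s))) / η s
        - (-(-(Real.sqrt (W (η s))))) / (1 - η s) + c * 1) s := by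
      intro s
      exact (((hη.ode s).log (hη.mem s).1.ne').sub
        (((hη.ode s).const_sub 1).log (sub_pos.2 (hη.mem s).2).ne')).add
        ((hasDerivAt_id s).const_mul c)
    refine antitone_of_deriv_nonpos (fun s => (hd s).differentiableAt) fun s => ?_
    rw [(hd s).deriv]
    have h1 := (hη.mem s).1
    have h2 := sub_pos.2 (hη.mem s).2
    have h3 := hlow _ (hmem s)
    have : -(Real.sqrt (W (η s))) / η s
        - (-(-(Real.sqrt (W (η s))))) / (1 - η s) + c * 1 =
        (c * (η s * (1 - η s)) - Real.sqrt (W (η s))) / (η s * (1 - η s)) := by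
      field_simp; ring
    rw [this]
    exact div_nonpos_of_nonpos_of_nonneg (by linarith) (by positivity)
  have hq0 : q 0 = 0 := by simp only [q, hη.init]; norm_num
  refine ⟨c, hc, K, hK, fun s => ?_⟩
  have h1 := (hη.mem s).1
  have h2 := sub_pos.2 (hη.mem s).2
  rcases le_total 0 s with hs | hs
  · have := hq hs
    rw [hq0] at this
    have h3 : Real.log (1 - η s) ≤ 0 := Real.log_nonpos h2.le (by linarith)
    have h4 : Real.log (η s) ≤ -(c * s) := by simp only [q] at this; linarith
    rw [abs_of_nonneg hs]
    exact (hup _ (hmem s)).1.trans (by gcongr; exact (Real.log_le_iff_le_exp h1).1 h4)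
  · have := hq hs
    rw [hq0] at this
    have h3 : Real.log (η s) ≤ 0 := Real.log_nonpos h1.le (hη.mem s).2.le
    have h4 : Real.log (1 - η s) ≤ -(c * -s) := by simp only [q] at this; linarith
    rw [abs_of_nonpos hs]
    exact (hup _ (hmem s)).2.trans (by gcongr; exact (Real.log_le_iff_le_exp h2).1 h4)

structure Kern (h : ℝ → ℝ) : Prop where
  cont : Continuous h
  pos : ∀ s, 0 < h s
  decay : ∃ c > (0:ℝ), ∃ K > (0:ℝ), ∀ s, h s ≤ K * Real.exp (-(c * |s|))

lemma integrable_exp_neg_abs {c : ℝ} (hc : 0 < c) :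
    Integrable (fun s : ℝ => Real.exp (-(c * |s|))) := by
  rw [← integrableOn_univ, ← Iic_union_Ioi (a := (0:ℝ))]
  refine IntegrableOn.union ?_ ?_
  · refine (integrableOn_exp_mul_Iic hc 0).congr_fun (fun s hs => ?_) measurableSet_Iic
    simp only [abs_of_nonpos (show s ≤ 0 from hs)]; congr 1; ring
  · refine (integrableOn_exp_mul_Ioi (neg_neg_of_pos hc) 0).congr_fun (fun s hs => ?_) measurableSet_Ioi
    simp only [abs_of_pos (show 0 < s from hs)]; congr 1; ring

lemma Kern.integrable_pow {h : ℝ → ℝ} (hh : Kern h) (k : ℕ) :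
    Integrable (fun s => (1 + |s|) ^ k * h s) := by
  obtain ⟨c, hc, K, hK, hd⟩ := hh.decay
  have hb : ∃ B : ℝ, ∀ s : ℝ, (1 + |s|) ^ k ≤ B * Real.exp (c / 2 * |s|) := by
    refine ⟨(k.factorial : ℝ) / (c/2) ^ k * Real.exp (c/2), fun s => ?_⟩
    have h1 := Real.pow_div_factorial_le_exp (x := c/2 * (1 + |s|)) (by positivity) k
    have h2 : Real.exp (c/2 * (1 + |s|)) = Real.exp (c/2) * Real.exp (c/2 * |s|) := by
      rw [← Real.exp_add]; congr 1; ring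
    rw [h2, mul_pow, div_le_iff₀ (by positivity)] at h1
    rw [div_mul_eq_mul_div, div_mul_eq_mul_div, le_div_iff₀ (by positivity)]
    linarith
  obtain ⟨B, hB⟩ := hb
  refine ((integrable_exp_neg_abs (half_pos hc)).const_mul (B * K)).mono'
    (by have := hh.cont; fun_prop) (Eventually.of_forall fun s => ?_)
  have h0 := (hh.pos s).le
  rw [Real.norm_eq_abs, abs_of_nonneg (by positivity)]
  calc (1 + |s|) ^ k * h s ≤ (B * Real.exp (c / 2 * |s|)) * (K * Real.exp (-(c * |s|))) :=
        mul_le_mul (hB s) (hd s) h0 (le_trans (by positivity) (hB s))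
    _ = B * K * (Real.exp (c / 2 * |s|) * Real.exp (-(c * |s|))) := by ring
    _ = B * K * Real.exp (-(c / 2 * |s|)) := by
        rw [← Real.exp_add]; congr 2; ring

lemma Kern.integrable_mul {h : ℝ → ℝ} (hh : Kern h) {F : ℝ → ℝ} (hF : Continuous F) (k : ℕ) (A : ℝ)
    (hb : ∀ s, |F s| ≤ A * (1 + |s|) ^ k) : Integrable (fun s => F s * h s) := by
  refine ((hh.integrable_pow k).const_mul A).mono' (by have := hh.cont; fun_prop)
    (Eventually.of_forall fun s => ?_)
  rw [norm_mul, Real.norm_eq_abs, Real.norm_eq_abs, abs_of_pos (hh.pos s), ← mul_assoc]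
  exact mul_le_mul_of_nonneg_right (hb s) (hh.pos s).le

lemma Kern.integrable {h : ℝ → ℝ} (hh : Kern h) : Integrable h := by
  simpa using hh.integrable_pow 0

lemma Kern.integrable_id_mul {h : ℝ → ℝ} (hh : Kern h) : Integrable (fun s => s * h s) :=
  hh.integrable_mul continuous_id 1 1 (fun s => by simp)

lemma poly_err {R : ℝ} (hR : 0 < R) (m : ℕ) : ∃ K : ℝ, 0 ≤ K ∧ ∀ y : ℝ,
    |(R + y) ^ m - R ^ m - m * R ^ (m - 1) * y| ≤ K * (y ^ 2 * (1 + |y|) ^ m) := by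
  induction m with
  | zero => exact ⟨0, le_rfl, fun y => by simp⟩
  | succ m ih =>
    obtain ⟨K, hK, h⟩ := ih
    refine ⟨(R + 1) * K + m * R ^ (m - 1), by positivity, fun y => ?_⟩
    have e : (R + y) ^ (m + 1) - R ^ (m + 1) - ((m + 1 : ℕ) : ℝ) * R ^ (m + 1 - 1) * y =
        (R + y) * ((R + y) ^ m - R ^ m - m * R ^ (m - 1) * y) + m * R ^ (m - 1) * y ^ 2 := by
      rcases m with _ | m
      · simp
      · simp; ring
    rw [e]
    have h1 : |R + y| ≤ (R + 1) * (1 + |y|) := by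
      rw [abs_le]; constructor <;> nlinarith [neg_abs_le y, le_abs_self y, abs_nonneg y]
    have h2 : (1:ℝ) ≤ (1 + |y|) ^ (m + 1) := one_le_pow₀ (by linarith [abs_nonneg y])
    calc _ ≤ |R + y| * |(R + y) ^ m - R ^ m - m * R ^ (m - 1) * y| + m * R ^ (m - 1) * y ^ 2 := by
          refine (abs_add_le _ _).trans ?_
          rw [abs_mul]
          gcongr
          rw [abs_of_nonneg (by positivity)]
      _ ≤ ((R + 1) * (1 + |y|)) * (K * (y ^ 2 * (1 + |y|) ^ m)) + m * R ^ (m - 1) * (y ^ 2 * (1 + |y|) ^ (m + 1)) := by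
          gcongr
          · exact h y
          · exact le_mul_of_one_le_right (by positivity) h2
      _ = _ := by ring

lemma trunc_err {R : ℝ} (hR : 0 < R) (m : ℕ) (hm : 1 ≤ m) : ∃ K : ℝ, 0 ≤ K ∧ ∀ y : ℝ,
    |max (R + y) 0 ^ m - R ^ m - m * R ^ (m - 1) * y| ≤ K * (y ^ 2 * (1 + |y|) ^ m) := by
  obtain ⟨K, hK, h⟩ := poly_err hR m
  refine ⟨K + (R ^ m / R ^ 2 + m * R ^ (m - 1) / R), by positivity, fun y => ?_⟩
  have h2 : (1:ℝ) ≤ (1 + |y|) ^ m := one_le_pow₀ (by linarith [abs_nonneg y])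
  rcases le_or_gt 0 (R + y) with hy | hy
  · rw [max_eq_left hy]
    refine (h y).trans ?_
    gcongr
    have : 0 ≤ R ^ m / R ^ 2 + m * R ^ (m - 1) / R := by positivity
    linarith
  · rw [max_eq_right hy.le, zero_pow (by omega)]
    have hy' : R ≤ |y| := by rw [abs_of_nonpos (by linarith)]; linarith
    have hy2 : R ^ 2 ≤ y ^ 2 := by rw [← sq_abs y]; gcongr
    have hy3 : R * |y| ≤ y ^ 2 := by rw [← sq_abs y, sq]; gcongr
    calc |0 - R ^ m - m * R ^ (m - 1) * y| ≤ R ^ m + m * R ^ (m - 1) * |y| := by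
          refine (abs_sub _ _).trans ?_
          rw [abs_mul, abs_of_nonneg (show 0 ≤ (m:ℝ) * R ^ (m-1) by positivity), zero_sub, abs_neg,
            abs_of_nonneg (show 0 ≤ R ^ m by positivity)]
      _ = R ^ m / R ^ 2 * R ^ 2 + m * R ^ (m - 1) / R * (R * |y|) := by field_simp
      _ ≤ R ^ m / R ^ 2 * y ^ 2 + m * R ^ (m - 1) / R * y ^ 2 := by gcongr
      _ = (R ^ m / R ^ 2 + m * R ^ (m - 1) / R) * (y ^ 2 * 1) := by ring
      _ ≤ (R ^ m / R ^ 2 + m * R ^ (m - 1) / R) * (y ^ 2 * (1 + |y|) ^ m) := by gcongr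
      _ ≤ _ := mul_le_mul_of_nonneg_right (by linarith) (by positivity)

def Jint (h : ℝ → ℝ) (R : ℝ) (m : ℕ) (ε τ : ℝ) : ℝ := ∫ s, max (R + ε * (s + τ)) 0 ^ m * h s

lemma trunc_bound {R ε T τ : ℝ} (hR : 0 < R) (hε : 0 < ε) (hτ : |τ| ≤ T) (m : ℕ) (s : ℝ) :
    |max (R + ε * (s + τ)) 0 ^ m| ≤ (R + ε * (1 + T)) ^ m * (1 + |s|) ^ m := by
  have hT : 0 ≤ T := (abs_nonneg _).trans hτ
  rw [← mul_pow, abs_pow]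
  gcongr
  rw [abs_of_nonneg (le_max_right _ _)]
  apply max_le _ (by positivity)
  have h1 : s + τ ≤ |s| + T := add_le_add (le_abs_self _) ((le_abs_self _).trans hτ)
  have h2 := abs_nonneg s
  have : ε * (s + τ) ≤ ε * ((1 + T) * (1 + |s|)) := by gcongr; nlinarith
  nlinarith [mul_nonneg hR.le h2]

lemma J_integrable {h : ℝ → ℝ} (hh : Kern h) {R ε : ℝ} (hR : 0 < R) (hε : 0 < ε) (m : ℕ) (τ : ℝ) :
    Integrable (fun s => max (R + ε * (s + τ)) 0 ^ m * h s) :=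
  hh.integrable_mul (by fun_prop) m _ (trunc_bound hR hε le_rfl m)

lemma J_expand {h : ℝ → ℝ} (hh : Kern h) (h1 : ∫ s, h s = 1) {R : ℝ} (hR : 0 < R) {m : ℕ}
    (hm : 1 ≤ m) (T : ℝ) : ∃ C > (0:ℝ), ∀ ε τ : ℝ, 0 < ε → ε ≤ 1 → |τ| ≤ T →
      |Jint h R m ε τ - R ^ m - m * R ^ (m - 1) * ε * ((∫ s, s * h s) + τ)| ≤ C * ε ^ 2 := by
  obtain ⟨K, hK, hE⟩ := trunc_err hR m hm
  have hI := hh.integrable_pow (m + 2)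
  have hIn : 0 ≤ ∫ s, (1 + |s|) ^ (m + 2) * h s :=
    integral_nonneg fun s => mul_nonneg (by positivity) (hh.pos s).le
  refine ⟨K * (1 + |T|) ^ (m + 2) * (∫ s, (1 + |s|) ^ (m + 2) * h s) + 1, by positivity, ?_⟩
  intro ε τ hε hε1 hτ
  have hT : 0 ≤ T := (abs_nonneg _).trans hτ
  rw [abs_of_nonneg hT]
  have e : Jint h R m ε τ - R ^ m - m * R ^ (m - 1) * ε * ((∫ s, s * h s) + τ) =
      ∫ s, (max (R + ε * (s + τ)) 0 ^ m - R ^ m - m * R ^ (m - 1) * (ε * (s + τ))) * h s := by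
    have : ∀ s, (max (R + ε * (s + τ)) 0 ^ m - R ^ m - m * R ^ (m - 1) * (ε * (s + τ))) * h s =
      max (R + ε * (s + τ)) 0 ^ m * h s - (R ^ m + m * R ^ (m - 1) * ε * τ) * h s
        - m * R ^ (m - 1) * ε * (s * h s) := fun s => by ring
    simp_rw [this]
    have i1 := J_integrable hh hR hε m τ
    have i2 := hh.integrable.const_mul (R ^ m + m * R ^ (m - 1) * ε * τ)
    have i3 := hh.integrable_id_mul.const_mul (m * R ^ (m - 1) * ε)
    have i12 : Integrable (fun s => max (R + ε * (s + τ)) 0 ^ m * h s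
        - (R ^ m + m * R ^ (m - 1) * ε * τ) * h s) := i1.sub i2
    rw [integral_sub i12 i3, integral_sub i1 i2, integral_const_mul, integral_const_mul, h1,
      Jint]
    ring
  rw [e, ← Real.norm_eq_abs]
  calc _ ≤ ∫ s, (K * (1 + T) ^ (m + 2) * ε ^ 2) * ((1 + |s|) ^ (m + 2) * h s) := by
        refine norm_integral_le_of_norm_le (hI.const_mul _) (Eventually.of_forall fun s => ?_)
        rw [norm_mul, Real.norm_eq_abs, Real.norm_eq_abs, abs_of_pos (hh.pos s), ← mul_assoc (_ * ε ^ 2)]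
        refine mul_le_mul_of_nonneg_right ((hE _).trans ?_) (hh.pos s).le
        have ha : |s + τ| ≤ (1 + T) * (1 + |s|) := by
          refine (abs_add_le _ _).trans ?_
          nlinarith [abs_nonneg s]
        have hb : 1 + |ε * (s + τ)| ≤ (1 + T) * (1 + |s|) := by
          rw [abs_mul, abs_of_pos hε]
          have : ε * |s + τ| ≤ 1 * (|s| + T) := by
            gcongr; exact (abs_add_le _ _).trans (by gcongr)
          nlinarith [abs_nonneg s]
        calc K * ((ε * (s + τ)) ^ 2 * (1 + |ε * (s + τ)|) ^ m)
            = K * (ε ^ 2 * |s + τ| ^ 2 * (1 + |ε * (s + τ)|) ^ m) := by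
              rw [mul_pow, sq_abs]
          _ ≤ K * (ε ^ 2 * ((1 + T) * (1 + |s|)) ^ 2 * ((1 + T) * (1 + |s|)) ^ m) := by
              gcongr
          _ = _ := by simp only [mul_pow]; ring
    _ = K * (1 + T) ^ (m + 2) * (∫ s, (1 + |s|) ^ (m + 2) * h s) * ε ^ 2 := by
        rw [integral_const_mul]; ring
    _ ≤ _ := by nlinarith [sq_nonneg ε]

lemma J_continuous {h : ℝ → ℝ} (hh : Kern h) {R ε : ℝ} (hR : 0 < R) (hε : 0 < ε) (m : ℕ) (T : ℝ) :
    ContinuousOn (Jint h R m ε) (Icc (-T) T) := by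
  refine continuousOn_of_dominated (bound := fun s => (R + ε * (1 + T)) ^ m * ((1 + |s|) ^ m * h s))
    (fun τ _ => (J_integrable hh hR hε m τ).aestronglyMeasurable)
    (fun τ hτ => Eventually.of_forall fun s => ?_) ((hh.integrable_pow m).const_mul _)
    (Eventually.of_forall fun s => ?_)
  · rw [norm_mul, Real.norm_eq_abs, Real.norm_eq_abs, abs_of_pos (hh.pos s), ← mul_assoc]
    exact mul_le_mul_of_nonneg_right (trunc_bound hR hε (abs_le.2 hτ) m s) (hh.pos s).le
  · exact Continuous.continuousOn (by fun_prop)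

lemma J_strictMono {h : ℝ → ℝ} (hh : Kern h) {R ε : ℝ} (hR : 0 < R) (hε : 0 < ε) {m : ℕ}
    (hm : 1 ≤ m) : StrictMono (Jint h R m ε) := by
  intro a b hab
  rw [← sub_pos, Jint, Jint, ← integral_sub (J_integrable hh hR hε m b) (J_integrable hh hR hε m a)]
  have hle : ∀ s, max (R + ε * (s + a)) 0 ≤ max (R + ε * (s + b)) 0 := fun s => by gcongr
  have i12 : Integrable (fun s => max (R + ε * (s + b)) 0 ^ m * h s
      - max (R + ε * (s + a)) 0 ^ m * h s) :=
    (J_integrable hh hR hε m b).sub (J_integrable hh hR hε m a)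
  rw [integral_pos_iff_support_of_nonneg _ i12]
  · refine lt_of_lt_of_le ?_ (measure_mono (show Ioi (-a) ⊆ _ from ?_))
    · simp
    · intro s hs
      have hs' : 0 < s + a := by have : -a < s := hs; linarith
      rw [Function.mem_support, ← sub_mul]
      refine (mul_pos (sub_pos.2 ?_) (hh.pos s)).ne'
      rw [max_eq_left (by positivity), max_eq_left (by have : 0 < s + b := by linarith
                                                       positivity)]
      gcongr
  · intro s
    simp only [Pi.zero_apply, ← sub_mul]
    refine mul_nonneg (sub_nonneg.2 ?_) (hh.pos s).le
    have := hle s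
    gcongr

lemma vol_eq {n : ℕ} (hn : 2 ≤ n) {h f : ℝ → ℝ} (hh : Kern h) (hf : ∀ s, HasDerivAt f (-h s) s)
    (hf0 : Tendsto f atTop (nhds 0)) (hfn : ∀ s, 0 ≤ f s) {R ε : ℝ} (hR : 0 < R) (hε : 0 < ε) (τ : ℝ) :
    ∫ x : En n, f ((‖x‖ - R) / ε - τ) = ballVol n * Jint h R n ε τ := by
  have : NeZero n := ⟨by omega⟩
  have hfc : Continuous f := continuous_iff_continuousAt.2 fun s => (hf s).continuousAt
  have hrep : ∀ a, ENNReal.ofReal (f a) = ∫⁻ t, (Ioi a).indicator (fun t => ENNReal.ofReal (h t)) t := by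
    intro a
    rw [lintegral_indicator measurableSet_Ioi,
      ← ofReal_integral_eq_lintegral_ofReal hh.integrable.integrableOn
        (Eventually.of_forall fun s => (hh.pos s).le)]
    have := integral_Ioi_of_hasDerivAt_of_tendsto' (a := a) (fun x _ => hf x)
      hh.integrable.neg.integrableOn hf0
    rw [integral_neg] at this
    congr 1
    linarith
  have hint : ∀ τ, 0 ≤ Jint h R n ε τ := fun τ => integral_nonneg fun s =>
    mul_nonneg (pow_nonneg (le_max_right _ _) _) (hh.pos s).le
  rw [integral_eq_lintegral_of_nonneg_ae (Eventually.of_forall fun x => hfn _)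
    (Continuous.aestronglyMeasurable (by fun_prop))]
  simp_rw [hrep]
  rw [lintegral_lintegral_swap]
  · have key : ∀ t, ∫⁻ x : En n, (Ioi ((‖x‖ - R) / ε - τ)).indicator (fun t => ENNReal.ofReal (h t)) t
        = ENNReal.ofReal (ballVol n * (max (R + ε * (t + τ)) 0 ^ n * h t)) := by
      intro t
      have e1 : ∀ x : En n, (Ioi ((‖x‖ - R) / ε - τ)).indicator (fun t => ENNReal.ofReal (h t)) t
          = (Metric.ball (0 : En n) (max (R + ε * (t + τ)) 0)).indicator
              (fun _ => ENNReal.ofReal (h t)) x := by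
        intro x
        have : (t ∈ Ioi ((‖x‖ - R) / ε - τ)) ↔
            x ∈ Metric.ball (0 : En n) (max (R + ε * (t + τ)) 0) := by
          rw [mem_Ioi, mem_ball_zero_iff, lt_max_iff, sub_lt_iff_lt_add, div_lt_iff₀ hε]
          constructor
          · intro h; left; linarith
          · rintro (h | h)
            · linarith
            · exact absurd h (not_lt.2 (norm_nonneg x))
        by_cases hx : x ∈ Metric.ball (0 : En n) (max (R + ε * (t + τ)) 0)
        · rw [indicator_of_mem hx, indicator_of_mem (this.2 hx)]
        · rw [indicator_of_notMem hx, indicator_of_notMem (fun h => hx (this.1 h))]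
      simp_rw [e1]
      rw [lintegral_indicator_const Metric.isOpen_ball.measurableSet,
        Measure.addHaar_ball volume (0 : En n) (le_max_right _ _), finrank_euclideanSpace_fin,
        ENNReal.ofReal_mul (by unfold ballVol; positivity), ENNReal.ofReal_mul (by positivity), ballVol,
        ENNReal.ofReal_toReal Metric.isBounded_ball.measure_lt_top.ne]
      ring
    simp_rw [key]
    rw [← ofReal_integral_eq_lintegral_ofReal ((J_integrable hh hR hε n τ).const_mul _)
      (Eventually.of_forall fun s => mul_nonneg (by unfold ballVol; positivity)
        (mul_nonneg (by positivity) (hh.pos s).le)), integral_const_mul, ENNReal.toReal_ofReal]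
    · rfl
    · exact mul_nonneg (by unfold ballVol; positivity) (hint τ)
  · have hm : MeasurableSet {p : En n × ℝ | (‖p.1‖ - R) / ε - τ < p.2} :=
      measurableSet_lt (by fun_prop) (by fun_prop)
    have : Measurable ({p : En n × ℝ | (‖p.1‖ - R) / ε - τ < p.2}.indicator
        (fun p => ENNReal.ofReal (h p.2))) := by
      refine Measurable.indicator ?_ hm
      have := hh.cont
      exact (this.measurable.comp measurable_snd).ennreal_ofReal
    exact this.aemeasurable

lemma energy_eq {n : ℕ} (hn : 2 ≤ n) (g : ℝ → ℝ) {R ε : ℝ} (hε : 0 < ε) (τ : ℝ) :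
    ∫ x : En n, g ((‖x‖ - R) / ε - τ) = n * ballVol n * ε * Jint g R (n - 1) ε τ := by
  have : NeZero n := ⟨by omega⟩
  rw [integral_fun_norm_addHaar volume (fun y => g ((y - R) / ε - τ)), finrank_euclideanSpace_fin]
  have e1 : ∫ y in Ioi (0:ℝ), y ^ (n - 1) • g ((y - R) / ε - τ) =
      ∫ y : ℝ, max y 0 ^ (n - 1) * g ((y - R) / ε - τ) := by
    rw [← integral_indicator measurableSet_Ioi]
    congr 1
    ext y
    by_cases hy : y ∈ Ioi (0:ℝ)
    · rw [indicator_of_mem hy, max_eq_left (le_of_lt hy), smul_eq_mul]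
    · rw [indicator_of_notMem hy, max_eq_right (not_lt.1 hy), zero_pow (by omega), zero_mul]
  have e2 : Jint g R (n - 1) ε τ = ε⁻¹ * ∫ y : ℝ, max y 0 ^ (n - 1) * g ((y - R) / ε - τ) := by
    rw [← integral_add_left_eq_self _ (R + ε * τ)]
    have := Measure.integral_comp_mul_left (fun y => max (R + ε * τ + y) 0 ^ (n - 1) *
      g ((R + ε * τ + y - R) / ε - τ)) ε
    rw [abs_of_pos (inv_pos.2 hε), smul_eq_mul] at this
    rw [← this, Jint]
    congr 1
    ext s
    congr 2
    · congr 1; ring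
    · field_simp; ring
  rw [e1, e2, nsmul_eq_mul, smul_eq_mul, ballVol, Measure.real]
  field_simp

lemma AC_eq {n : ℕ} (hn : 2 ≤ n) {W η : ℝ → ℝ} (hW : DoubleWell W) (hη : TransitionProfile W η)
    {R ε : ℝ} (hε : 0 < ε) (τ : ℝ) :
    AC n W ε (fun x : En n => η ((‖x‖ - R) / ε - τ)) =
      2 * n * ballVol n * Jint (fun s => W (η s)) R (n - 1) ε τ := by
  have : NeZero n := ⟨by omega⟩
  have hE := energy_eq hn (fun s => W (η s)) (R := R) hε τ
  have hG : ∫ x : En n, ‖fderiv ℝ (fun x : En n => η ((‖x‖ - R) / ε - τ)) x‖ ^ 2 =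
      (ε⁻¹) ^ 2 * ∫ x : En n, W (η ((‖x‖ - R) / ε - τ)) := by
    rw [← integral_const_mul]
    refine integral_congr_ae ?_
    have : ∀ᵐ x : En n, x ≠ 0 := by simp [ae_iff]
    filter_upwards [this] with x hx
    have hd : DifferentiableAt ℝ (fun y : En n => ‖y‖) x :=
      (contDiffAt_norm ℝ hx (n := 1)).differentiableAt (by norm_num)
    have h1 : HasFDerivAt (fun y : En n => (‖y‖ - R) / ε - τ)
        (ε⁻¹ • fderiv ℝ (fun y : En n => ‖y‖) x) x := by
      have := ((hd.hasFDerivAt.sub_const R).const_smul ε⁻¹).sub_const τ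
      refine this.congr_of_eventuallyEq (Eventually.of_forall fun y => ?_)
      simp [div_eq_inv_mul]
    have h2 := (hη.ode ((‖x‖ - R) / ε - τ)).comp_hasFDerivAt x h1
    have h3 : fderiv ℝ (fun x : En n => η ((‖x‖ - R) / ε - τ)) x = _ := h2.fderiv
    rw [h3, norm_smul, norm_smul, norm_fderiv_norm hd, mul_one, mul_pow, norm_neg, Real.norm_eq_abs,
      Real.norm_eq_abs, sq_abs, sq_abs, Real.sq_sqrt (W_nonneg hW (Ioo_subset_Icc_self (hη.mem _)))]
    ring
  rw [AC, hG, hE]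
  field_simp
  ring

def wext (W : ℝ → ℝ) (t : ℝ) : ℝ := Real.sqrt (W (max 0 (min 1 t)))

lemma wext_cont {W : ℝ → ℝ} (hW : DoubleWell W) : Continuous (wext W) := by
  have h : Continuous (fun t : ℝ => W (max 0 (min 1 t))) :=
    hW.contDiffOn.continuousOn.comp_continuous (by fun_prop)
      (fun t => ⟨le_max_left _ _, max_le zero_le_one (min_le_left _ _)⟩)
  exact Real.continuous_sqrt.comp h

lemma wext_eq {W : ℝ → ℝ} {t : ℝ} (ht : t ∈ Icc (0:ℝ) 1) : wext W t = Real.sqrt (W t) := by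
  rw [wext, min_eq_right ht.2, max_eq_right ht.1]

def Pext (W : ℝ → ℝ) (t : ℝ) : ℝ := ∫ s in (0:ℝ)..t, wext W s

lemma Pext_deriv {W : ℝ → ℝ} (hW : DoubleWell W) (t : ℝ) : HasDerivAt (Pext W) (wext W t) t :=
  (wext_cont hW).integral_hasStrictDerivAt 0 t |>.hasDerivAt

lemma Pext_eq {W : ℝ → ℝ} {t : ℝ} (ht : t ∈ Icc (0:ℝ) 1) : Phi W t = Pext W t := by
  refine intervalIntegral.integral_congr fun s hs => ?_
  rw [uIcc_of_le ht.1] at hs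
  exact (wext_eq ⟨hs.1, hs.2.trans ht.2⟩).symm

lemma Pext_cont {W : ℝ → ℝ} (hW : DoubleWell W) : Continuous (Pext W) :=
  continuous_iff_continuousAt.2 fun s => (Pext_deriv hW s).continuousAt

lemma Pext_zero (W : ℝ → ℝ) : Pext W 0 = 0 := by simp [Pext]

lemma Pext_one {W : ℝ → ℝ} (hW : DoubleWell W) : Pext W 1 = 1 := by
  rw [← Pext_eq (by simp), Phi, hW.normalized]

lemma Pext_mono {W : ℝ → ℝ} (hW : DoubleWell W) : Monotone (Pext W) :=
  monotone_of_deriv_nonneg (fun t => (Pext_deriv hW t).differentiableAt) fun t => by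
    rw [(Pext_deriv hW t).deriv]; exact Real.sqrt_nonneg _

lemma Pext_pos {W : ℝ → ℝ} (hW : DoubleWell W) {t : ℝ} (ht : t ∈ Ioo (0:ℝ) 1) : 0 < Pext W t := by
  refine intervalIntegral.intervalIntegral_pos_of_pos_on ((wext_cont hW).intervalIntegrable _ _)
    (fun s hs => ?_) ht.1
  have hs' : s ∈ Ioo (0:ℝ) 1 := ⟨hs.1, hs.2.trans ht.2⟩
  rw [wext_eq (Ioo_subset_Icc_self hs')]
  exact Real.sqrt_pos.2 (hW.pos_on s hs')

lemma Pext_le_one {W : ℝ → ℝ} (hW : DoubleWell W) {t : ℝ} (ht : t ≤ 1) : Pext W t ≤ 1 := by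
  rw [← Pext_one hW]; exact Pext_mono hW ht

section prof
variable {W η : ℝ → ℝ}

lemma eta_cont (hη : TransitionProfile W η) : Continuous η :=
  continuous_iff_continuousAt.2 fun s => (hη.ode s).continuousAt

lemma g_cont (hW : DoubleWell W) (hη : TransitionProfile W η) : Continuous (fun s => W (η s)) :=
  hW.contDiffOn.continuousOn.comp_continuous (eta_cont hη)
    (fun s => Ioo_subset_Icc_self (hη.mem s))

lemma g_kern (hW : DoubleWell W) (hη : TransitionProfile W η) : Kern (fun s => W (η s)) :=
  ⟨g_cont hW hη, fun s => hW.pos_on _ (hη.mem s), g_decay hW hη⟩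

lemma Pη_deriv (hW : DoubleWell W) (hη : TransitionProfile W η) (s : ℝ) :
    HasDerivAt (fun s => Pext W (η s)) (-(W (η s))) s := by
  have := (Pext_deriv hW (η s)).comp s (hη.ode s)
  have hm := Ioo_subset_Icc_self (hη.mem s)
  rw [wext_eq hm] at this
  rwa [mul_neg, Real.mul_self_sqrt (W_nonneg hW hm)] at this

lemma Pη_bot (hW : DoubleWell W) (hη : TransitionProfile W η) :
    Tendsto (fun s => Pext W (η s)) atBot (nhds 1) := by
  have := ((Pext_cont hW).tendsto 1).comp hη.tendsto_bot
  rwa [Pext_one hW] at this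

lemma Pη_top (hW : DoubleWell W) (hη : TransitionProfile W η) :
    Tendsto (fun s => Pext W (η s)) atTop (nhds 0) := by
  have := ((Pext_cont hW).tendsto 0).comp hη.tendsto_top
  rwa [Pext_zero W] at this

lemma g_int (hW : DoubleWell W) (hη : TransitionProfile W η) : ∫ s, W (η s) = 1 := by
  have := integral_of_hasDerivAt_of_tendsto (Pη_deriv hW hη) (g_kern hW hη).integrable.neg
    (Pη_bot hW hη) (Pη_top hW hη)
  rw [integral_neg] at this
  linarith

def hker (W η : ℝ → ℝ) (p s : ℝ) : ℝ := W (η s) * p * Pext W (η s) ^ (p - 1)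

lemma h_kern (hW : DoubleWell W) (hη : TransitionProfile W η) {p : ℝ} (hp : 1 < p) :
    Kern (hker W η p) := by
  have hg := g_kern hW hη
  have hP : ∀ s, 0 < Pext W (η s) := fun s => Pext_pos hW (hη.mem s)
  refine ⟨?_, fun s => ?_, ?_⟩
  · refine (hg.cont.mul continuous_const).mul ?_
    exact ((Pext_cont hW).comp (eta_cont hη)).rpow_const fun s => Or.inl (hP s).ne'
  · have := hg.pos s
    have := hP s
    unfold hker
    positivity
  · obtain ⟨c, hc, K, hK, h⟩ := hg.decay
    refine ⟨c, hc, K * p, by positivity, fun s => ?_⟩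
    have h1 : Pext W (η s) ^ (p - 1) ≤ 1 :=
      Real.rpow_le_one (hP s).le (Pext_le_one hW (hη.mem s).2.le) (by linarith)
    have h2 := (hg.pos s).le
    have h3 := h s
    calc hker W η p s ≤ W (η s) * p * 1 := by
          unfold hker; exact mul_le_mul_of_nonneg_left h1 (by positivity)
      _ = W (η s) * p := mul_one _
      _ ≤ K * Real.exp (-(c * |s|)) * p := by gcongr
      _ = _ := by ring

lemma f_deriv (hW : DoubleWell W) (hη : TransitionProfile W η) (p s : ℝ) :
    HasDerivAt (fun s => Pext W (η s) ^ p) (-(hker W η p s)) s := by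
  convert (Pη_deriv hW hη s).rpow_const (p := p) (Or.inl (Pext_pos hW (hη.mem s)).ne') using 1
  unfold hker; ring

lemma f_bot (hW : DoubleWell W) (hη : TransitionProfile W η) {p : ℝ} (hp : 1 < p) :
    Tendsto (fun s => Pext W (η s) ^ p) atBot (nhds 1) := by
  simpa using (Pη_bot hW hη).rpow_const (p := p) (Or.inr (by linarith))

lemma f_top (hW : DoubleWell W) (hη : TransitionProfile W η) {p : ℝ} (hp : 1 < p) :
    Tendsto (fun s => Pext W (η s) ^ p) atTop (nhds 0) := by
  have := (Pη_top hW hη).rpow_const (p := p) (Or.inr (by linarith))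
  rwa [Real.zero_rpow (by linarith)] at this

lemma h_int (hW : DoubleWell W) (hη : TransitionProfile W η) {p : ℝ} (hp : 1 < p) :
    ∫ s, hker W η p s = 1 := by
  have := integral_of_hasDerivAt_of_tendsto (f_deriv hW hη p) (h_kern hW hη hp).integrable.neg
    (f_bot hW hη hp) (f_top hW hη hp)
  rw [integral_neg] at this
  linarith

lemma Vderiv (n : ℕ) (hW : DoubleWell W) (hη : TransitionProfile W η) (s : ℝ) :
    deriv η s * derivWithin (Vpot n W) (Icc 0 1) (η s) =
      -hker W η ((n:ℝ) / ((n:ℝ) - 1)) s := by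
  have hm := hη.mem s
  have hm' := Ioo_subset_Icc_self hm
  have hd : HasDerivWithinAt (Vpot n W) (wext W (η s) * ((n:ℝ) / ((n:ℝ) - 1)) *
      Pext W (η s) ^ ((n:ℝ) / ((n:ℝ) - 1) - 1)) (Icc 0 1) (η s) := by
    refine ((Pext_deriv hW (η s)).rpow_const (p := (n:ℝ) / ((n:ℝ) - 1))
      (Or.inl (Pext_pos hW hm).ne')).hasDerivWithinAt.congr (fun t ht => ?_) ?_
    · rw [Vpot, Pext_eq ht]
    · rw [Vpot, Pext_eq hm']
  rw [hd.derivWithin (uniqueDiffOn_Icc zero_lt_one _ hm'), (hη.ode s).deriv, wext_eq hm', hker]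
  nth_rewrite 3 [← Real.mul_self_sqrt (W_nonneg hW hm')]
  ring

end prof

lemma ballVol_pos (n : ℕ) : 0 < ballVol n :=
  ENNReal.toReal_pos (Metric.measure_ball_pos volume (0 : En n) one_pos).ne'
    Metric.isBounded_ball.measure_lt_top.ne

lemma R0_pos (n : ℕ) : 0 < R0 n := Real.rpow_pos_of_pos (ballVol_pos n) _

lemma R0_pow (n k : ℕ) (hn : 2 ≤ n) (hk : k ≤ n) :
    ballVol n * R0 n ^ (n - k) = ballVol n ^ ((k:ℝ) / (n:ℝ)) := by
  have hn0 : (n:ℝ) ≠ 0 := by positivity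
  rw [R0, ← Real.rpow_natCast, ← Real.rpow_mul (ballVol_pos n).le]
  nth_rewrite 1 [← Real.rpow_one (ballVol n)]
  rw [← Real.rpow_add (ballVol_pos n)]
  congr 1
  rw [Nat.cast_sub hk]
  field_simp
  ring

theorem statement6 (n : ℕ) (hn : 2 ≤ n) (W : ℝ → ℝ) (hW : DoubleWell W)
    (η : ℝ → ℝ) (hη : TransitionProfile W η) :
    ∃ ε₀ > (0:ℝ), ∃ C > (0:ℝ), ∀ ε : ℝ, 0 < ε → ε < ε₀ →
      (∃! τ : ℝ, (∫ x : En n, Vpot n W (η ((‖x‖ - R0 n) / ε - τ))) = 1) ∧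
      ∀ τ : ℝ, (∫ x : En n, Vpot n W (η ((‖x‖ - R0 n) / ε - τ))) = 1 →
        |τ - (∫ s : ℝ, deriv η s * derivWithin (Vpot n W) (Icc 0 1) (η s) * s)| ≤ C * ε ∧
        |AC n W ε (fun x : En n => η ((‖x‖ - R0 n) / ε - τ))
            - 2 * (n : ℝ) * ballVol n ^ ((1 : ℝ) / (n : ℝ))
            - 2 * (n : ℝ) * ((n : ℝ) - 1) * ballVol n ^ ((2 : ℝ) / (n : ℝ)) *
                ((∫ s : ℝ, deriv η s * derivWithin (Vpot n W) (Icc 0 1) (η s) * s)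
                  + (∫ s : ℝ, W (η s) * s)) * ε|
          ≤ C * ε ^ 2 := by
  have hω := ballVol_pos n
  have hR := R0_pos n
  set ω := ballVol n with hωd
  set R := R0 n with hRd
  have hn1 : (1:ℝ) < n := by exact_mod_cast hn
  set p : ℝ := (n:ℝ) / ((n:ℝ) - 1) with hp
  have hp1 : 1 < p := by rw [hp, lt_div_iff₀ (by linarith)]; linarith
  set h := hker W η p with hh
  have hk : Kern h := h_kern hW hη hp1
  have hg := g_kern hW hη
  set τ₁ := ∫ s : ℝ, W (η s) * s with hτ₁
  set τ₀ := ∫ s : ℝ, deriv η s * derivWithin (Vpot n W) (Icc 0 1) (η s) * s with hτ₀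
  have e0 : ∫ s, s * h s = -τ₀ := by
    rw [hτ₀, ← integral_neg]
    congr 1; ext s
    rw [Vderiv n hW hη s]; ring
  have e1 : ∫ s, s * W (η s) = τ₁ := by
    rw [hτ₁]; congr 1; ext s; ring
  obtain ⟨D, hD, hJ⟩ := J_expand hk (h_int hW hη hp1) hR (m := n) (by omega) (|τ₀| + 1)
  obtain ⟨D', hD', hJ'⟩ := J_expand hg (g_int hW hη) hR (m := n - 1) (by omega) (|τ₀| + 1)
  rw [e0] at hJ
  rw [e1] at hJ'
  have r0 : ω * R ^ n = 1 := by have := R0_pow n 0 hn (by omega); simpa using this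
  have r1 : ω * R ^ (n - 1) = ω ^ ((1:ℝ) / n) := by
    have := R0_pow n 1 hn (by omega); simpa using this
  have r2 : ω * R ^ (n - 1 - 1) = ω ^ ((2:ℝ) / n) := by
    have := R0_pow n 2 hn (by omega)
    rw [show n - 1 - 1 = n - 2 by omega]
    simpa using this
  set A : ℝ := n * R ^ (n - 1) with hA
  have hA0 : 0 < A := by positivity
  set B : ℝ := ((n - 1 : ℕ) : ℝ) * R ^ (n - 1 - 1) with hB
  have hB0 : 0 ≤ B := by positivity
  have hC1 : 0 < D / A := by positivity
  have hC2 : 0 < 2 * n * ω * (D' + B * (D / A)) := by positivity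
  refine ⟨min 1 (A / D), by positivity, D / A + 2 * n * ω * (D' + B * (D / A)), by positivity, ?_⟩
  intro ε hε hε0
  have hε1 : ε ≤ 1 := (hε0.trans_le (min_le_left _ _)).le
  have hε2 : D * ε < A := by
    have := hε0.trans_le (min_le_right _ _)
    rw [lt_div_iff₀ hD] at this; linarith
  have hvol : ∀ τ, (∫ x : En n, Vpot n W (η ((‖x‖ - R) / ε - τ))) = ω * Jint h R n ε τ := by
    intro τ
    rw [← vol_eq hn hk (f_deriv hW hη p) (f_top hW hη hp1)
      (fun s => Real.rpow_nonneg (Pext_pos hW (hη.mem s)).le _) hR hε τ]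
    congr 1; ext x
    rw [Vpot, Pext_eq (Ioo_subset_Icc_self (hη.mem _))]
  have hiff : ∀ τ, (∫ x : En n, Vpot n W (η ((‖x‖ - R) / ε - τ))) = 1 ↔ Jint h R n ε τ = R ^ n := by
    intro τ
    rw [hvol, ← r0]
    exact mul_right_inj' hω.ne'
  have hmono : StrictMono (Jint h R n ε) := J_strictMono hk hR hε (by omega)
  have ht0 := abs_le.1 (le_refl |τ₀|)
  have hup : R ^ n < Jint h R n ε (τ₀ + 1) := by
    have := (abs_le.1 (hJ ε (τ₀ + 1) hε hε1 (abs_le.2 ⟨by linarith, by linarith⟩))).1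
    nlinarith
  have hlo : Jint h R n ε (τ₀ - 1) < R ^ n := by
    have := (abs_le.1 (hJ ε (τ₀ - 1) hε hε1 (abs_le.2 ⟨by linarith, by linarith⟩))).2
    nlinarith
  simp_rw [hiff]
  refine ⟨?_, ?_⟩
  · have hc : ContinuousOn (Jint h R n ε) (Icc (τ₀ - 1) (τ₀ + 1)) :=
      (J_continuous hk hR hε n (|τ₀| + 1)).mono (Icc_subset_Icc (by linarith) (by linarith))
    obtain ⟨τ, -, hτ⟩ := intermediate_value_Icc (by linarith) hc ⟨hlo.le, hup.le⟩
    exact ⟨τ, hτ, fun y hy => hmono.injective (hy.trans hτ.symm)⟩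
  · intro τ hτ
    have b1 : τ < τ₀ + 1 := hmono.lt_iff_lt.1 (by rw [hτ]; exact hup)
    have b2 : τ₀ - 1 < τ := hmono.lt_iff_lt.1 (by rw [hτ]; exact hlo)
    have hτT : |τ| ≤ |τ₀| + 1 := abs_le.2 ⟨by linarith, by linarith⟩
    have hd : |τ - τ₀| ≤ D / A * ε := by
      have := hJ ε τ hε hε1 hτT
      rw [hτ, sub_self, zero_sub, abs_neg, abs_mul, abs_of_pos (by positivity : 0 < A * ε),
        neg_add_eq_sub] at this
      rw [div_mul_eq_mul_div, le_div_iff₀ hA0]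
      have h3 : ε * (|τ - τ₀| * A) ≤ ε * (D * ε) := by nlinarith
      exact le_of_mul_le_mul_left h3 hε
    refine ⟨hd.trans (by gcongr; linarith), ?_⟩
    rw [AC_eq hn hW hη hε τ, ← r1, ← r2]
    have hj := hJ' ε τ hε hε1 hτT
    have e : 2 * (n:ℝ) * ω * Jint (fun s => W (η s)) R (n - 1) ε τ - 2 * n * (ω * R ^ (n - 1))
        - 2 * n * ((n:ℝ) - 1) * (ω * R ^ (n - 1 - 1)) * (τ₀ + τ₁) * ε =
        2 * n * ω * ((Jint (fun s => W (η s)) R (n - 1) ε τ - R ^ (n - 1) - B * ε * (τ₁ + τ))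
          + B * ε * (τ - τ₀)) := by
      rw [hB, Nat.cast_sub (by omega), Nat.cast_one]; ring
    rw [e, abs_mul, abs_of_pos (by positivity : 0 < 2 * (n:ℝ) * ω)]
    have e3 : |(Jint (fun s => W (η s)) R (n - 1) ε τ - R ^ (n - 1) - B * ε * (τ₁ + τ))
          + B * ε * (τ - τ₀)| ≤ D' * ε ^ 2 + B * ε * (D / A * ε) := by
      refine (abs_add_le _ _).trans (add_le_add hj ?_)
      rw [abs_mul, abs_of_nonneg (by positivity : 0 ≤ B * ε)]
      gcongr
    calc _ ≤ 2 * (n:ℝ) * ω * (D' * ε ^ 2 + B * ε * (D / A * ε)) := by gcongr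
      _ = 2 * n * ω * (D' + B * (D / A)) * ε ^ 2 := by ring
      _ ≤ _ := by gcongr; linarith
end
end
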